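/- arXiv:2211.05856 — 7 statements merged into one kernel-verified Lean document; each statement's English description precedes it below -/
import Mathlib

section
/- Let a < b be real numbers, X a topological space, and p : X → [a,b] a continuous map. Suppose that for every relative path γ and every continuous map h : [0,1] × [0,1] → [a,b] satisfying h(u,0) = p(γ(u)), h(0,t) = a, h(1,t) = b for all u,t, and h(u,1) = ℓ(u) for all u, there exists a continuous map H : [0,1] × [0,1] → X with H(u,0) = γ(u), p(H(u,t)) = h(u,t) for all u,t, and H(0,t) = γ(0), H(1,t) = γ(1) for all t. Then for every relative path γ there exists a section s of p such that γ is homotopic rel endpoints to s ∘ ℓ. -/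
open Set unitInterval

/-- The affine homeomorphism `[0,1] → [a,b]`, `u ↦ a + u (b - a)`. -/
noncomputable def ell (a b : ℝ) (hab : a ≤ b) : I → Set.Icc a b :=
  fun u => ⟨a + (u : ℝ) * (b - a), by
    constructor
    · nlinarith [u.2.1, u.2.2]
    · nlinarith [u.2.1, u.2.2]⟩

theorem continuous_ell (a b : ℝ) (hab : a ≤ b) : Continuous (ell a b hab) :=
  Continuous.subtype_mk (by fun_prop) _

/-- The inverse of `ell`. -/
noncomputable def ellInv (a b : ℝ) (hab : a < b) : Set.Icc a b → I :=
  fun c => ⟨((c : ℝ) - a) / (b - a),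
    div_nonneg (sub_nonneg.2 c.2.1) (sub_pos.2 hab).le,
    (div_le_one (sub_pos.2 hab)).2 (sub_le_sub_right c.2.2 a)⟩

theorem continuous_ellInv (a b : ℝ) (hab : a < b) : Continuous (ellInv a b hab) :=
  Continuous.subtype_mk (by fun_prop) _

theorem ell_ellInv (a b : ℝ) (hab : a < b) (c : Set.Icc a b) :
    ell a b hab.le (ellInv a b hab c) = c := by
  have h : b - a ≠ 0 := (sub_pos.2 hab).ne'
  ext
  simp [ell, ellInv, h]

theorem ellInv_ell (a b : ℝ) (hab : a < b) (u : I) :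
    ellInv a b hab (ell a b hab.le u) = u := by
  have h : b - a ≠ 0 := (sub_pos.2 hab).ne'
  ext
  simp [ell, ellInv, h]

/-- The straight-line homotopy from `f` to `g`, both valued in `[a,b]`. -/
noncomputable def lineHomotopy {a b : ℝ} (f g : I → Set.Icc a b) : I × I → Set.Icc a b :=
  fun z => ⟨(1 - (z.2 : ℝ)) * f z.1 + z.2 * g z.1,
    convex_Icc a b (f z.1).2 (g z.1).2 (sub_nonneg.2 z.2.2.2) z.2.2.1 (by ring)⟩

theorem continuous_lineHomotopy {a b : ℝ} {f g : I → Set.Icc a b} (hf : Continuous f)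
    (hg : Continuous g) : Continuous (lineHomotopy f g) :=
  Continuous.subtype_mk (by fun_prop) _

/-- If every homotopy (rel the endpoint fibers) of `p ∘ γ` to `ℓ` downstairs lifts to a
homotopy rel endpoints upstairs starting at `γ`, then every relative path `γ` is homotopic
rel endpoints to `s ∘ ℓ` for some section `s` of `p`. -/
theorem stmt0 {X : Type*} [TopologicalSpace X] (a b : ℝ) (hab : a < b)
    (p : X → Set.Icc a b) (hp : Continuous p)
    (hlift : ∀ γ : I → X, Continuous γ →
      ((p (γ 0) : ℝ) = a) → ((p (γ 1) : ℝ) = b) →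
      ∀ h : I × I → Set.Icc a b, Continuous h →
        (∀ u, h (u, 0) = p (γ u)) →
        (∀ t, (h (0, t) : ℝ) = a) →
        (∀ t, (h (1, t) : ℝ) = b) →
        (∀ u, h (u, 1) = ell a b hab.le u) →
        ∃ H : I × I → X, Continuous H ∧
          (∀ u, H (u, 0) = γ u) ∧
          (∀ u t, p (H (u, t)) = h (u, t)) ∧
          (∀ t, H (0, t) = γ 0) ∧ (∀ t, H (1, t) = γ 1)) :
    ∀ γ : I → X, Continuous γ →
      ((p (γ 0) : ℝ) = a) → ((p (γ 1) : ℝ) = b) →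
      ∃ s : Set.Icc a b → X, Continuous s ∧ (∀ c, p (s c) = c) ∧
        ∃ H : I × I → X, Continuous H ∧
          (∀ u, H (u, 0) = γ u) ∧
          (∀ u, H (u, 1) = s (ell a b hab.le u)) ∧
          (∀ t, H (0, t) = γ 0) ∧ (∀ t, H (1, t) = γ 1) := by
  intro γ hγ h0 h1
  obtain ⟨H, hH, hH0, hpH, hHl, hHr⟩ := hlift γ hγ h0 h1
    (lineHomotopy (p ∘ γ) (ell a b hab.le))
    (continuous_lineHomotopy (hp.comp hγ) (continuous_ell a b hab.le))
    (fun u => by ext; simp [lineHomotopy])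
    (fun t => by simp [lineHomotopy, ell, h0]; ring)
    (fun t => by simp [lineHomotopy, ell, h1]; ring)
    (fun u => by ext; simp [lineHomotopy])
  refine ⟨fun c => H (ellInv a b hab c, 1),
    hH.comp ((continuous_ellInv a b hab).prodMk continuous_const), fun c => ?_,
    H, hH, hH0, fun u => by simp only [ellInv_ell], hHl, hHr⟩
  rw [hpH]
  ext
  simp [lineHomotopy, ell_ellInv]
end

section
/- Let a < b be real numbers, X a topological space, and p : X → [a,b] a continuous map. Let D = {(x,c) ∈ X × [a,b] : c ≤ p(x)} with the subspace topology, and suppose there is a continuous map φ : D → X such that p(φ(x,c)) = c for all (x,c) ∈ D and φ(x, p(x)) = x for all x ∈ X (a continuous downward flow compatible with p). Then any two sections s₀, s₁ of p such that s₀ ∘ ℓ and s₁ ∘ ℓ are homotopic through relative paths are homotopic through sections. -/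
open Set unitInterval

/-- The straight-line homotopy of `[a,b]` from the identity to the constant map `b`. -/
noncomputable def slideToTop (a b : ℝ) (q : I × Set.Icc a b) : Set.Icc a b :=
  ⟨q.2 + (q.1 : ℝ) * (b - q.2), by
    constructor
    · nlinarith [q.1.2.1, q.2.2.1, q.2.2.2]
    · nlinarith [q.1.2.2, q.2.2.2]⟩

theorem continuous_slideToTop (a b : ℝ) : Continuous (slideToTop a b) := by
  unfold slideToTop
  fun_prop

theorem le_slideToTop (a b : ℝ) (q : I × Set.Icc a b) : q.2 ≤ slideToTop a b q := by
  change (q.2 : ℝ) ≤ q.2 + (q.1 : ℝ) * (b - q.2)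
  nlinarith [q.1.2.1, q.2.2.2]

theorem slideToTop_zero (a b : ℝ) (c : Set.Icc a b) : slideToTop a b (0, c) = c := by
  simp [slideToTop]

theorem slideToTop_one (a b : ℝ) (c : Set.Icc a b) :
    (slideToTop a b (1, c) : ℝ) = b := by
  simp [slideToTop]

section DownwardFlow

variable {X : Type*} [TopologicalSpace X] {a b : ℝ} {p : X → Set.Icc a b}
  {φ : {q : X × Set.Icc a b // (q.2 : ℝ) ≤ (p q.1 : ℝ)} → X}

/-- The section obtained by flowing down from a point of the fibre over `b`. -/
def flowSection (hφcont : Continuous φ) (x : X) (hx : (p x : ℝ) = b) : C(Set.Icc a b, X) where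
  toFun c := φ ⟨(x, c), c.2.2.trans_eq hx.symm⟩
  continuous_toFun := by fun_prop

/-- Every section is homotopic, through sections, to the section flowing down from its value
at `b`. -/
theorem homotopicWith_flowSection (hφcont : Continuous φ) (hφp : ∀ q, p (φ q) = q.1.2)
    (hφid : ∀ x : X, φ ⟨(x, p x), le_refl _⟩ = x) (s : C(Set.Icc a b, X))
    (hs : ∀ c, p (s c) = c) {d : Set.Icc a b} (hd : (d : ℝ) = b)
    (hx : (p (s d) : ℝ) = b) :
    ContinuousMap.HomotopicWith s (flowSection hφcont (s d) hx)
      (fun f => ∀ c, p (f c) = c) := by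
  have hslide := continuous_slideToTop a b
  refine ⟨⟨⟨⟨fun q => φ ⟨(s (slideToTop a b q), q.2), ?_⟩, ?_⟩, ?_, ?_⟩, ?_⟩⟩
  · rw [hs]
    exact le_slideToTop a b q
  · fun_prop
  · intro c
    refine Eq.trans ?_ (hφid (s c))
    simp [slideToTop_zero, hs]
  · intro c
    have h : slideToTop a b (1, c) = d := Subtype.ext ((slideToTop_one a b c).trans hd.symm)
    simp [flowSection, h]
  · exact fun t c => hφp _

/-- A path in the fibre over `b` induces a homotopy between the sections flowing down from its
endpoints. -/
theorem flowSection_homotopicWith (hφcont : Continuous φ) (hφp : ∀ q, p (φ q) = q.1.2)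
    (γ : C(I, X)) (hγ : ∀ t, (p (γ t) : ℝ) = b) :
    ContinuousMap.HomotopicWith (flowSection hφcont (γ 0) (hγ 0))
      (flowSection hφcont (γ 1) (hγ 1)) (fun f => ∀ c, p (f c) = c) :=
  ⟨⟨⟨⟨fun q => φ ⟨(γ q.1, q.2), q.2.2.2.trans_eq (hγ q.1).symm⟩, by fun_prop⟩,
    fun _ => rfl, fun _ => rfl⟩, fun _ _ => hφp _⟩⟩

end DownwardFlow

/-- If `p : X → [a,b]` admits a continuous downward flow `φ` defined on
`D = {(x,c) : c ≤ p x}` with `p (φ (x,c)) = c` and `φ (x, p x) = x`, then any two sections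
of `p` whose associated relative paths are homotopic through relative paths are homotopic
through sections. -/
theorem stmt4 {X : Type*} [TopologicalSpace X] (a b : ℝ) (hab : a < b)
    (p : X → Set.Icc a b) (hp : Continuous p)
    (φ : {q : X × Set.Icc a b // (q.2 : ℝ) ≤ (p q.1 : ℝ)} → X)
    (hφcont : Continuous φ)
    (hφp : ∀ q, p (φ q) = q.1.2)
    (hφid : ∀ x : X, φ ⟨(x, p x), le_refl _⟩ = x) :
    ∀ s₀ s₁ : Set.Icc a b → X,
      Continuous s₀ → (∀ c, p (s₀ c) = c) →
      Continuous s₁ → (∀ c, p (s₁ c) = c) →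
      (∃ G : I × I → X, Continuous G ∧
        (∀ u, G (u, 0) = s₀ (ell a b hab.le u)) ∧
        (∀ u, G (u, 1) = s₁ (ell a b hab.le u)) ∧
        (∀ t, (p (G (0, t)) : ℝ) = a) ∧
        (∀ t, (p (G (1, t)) : ℝ) = b)) →
      ∃ F : Set.Icc a b × I → X, Continuous F ∧
        (∀ c, F (c, 0) = s₀ c) ∧
        (∀ c, F (c, 1) = s₁ c) ∧
        (∀ c t, p (F (c, t)) = c) := by
  rintro s₀ s₁ hs₀ hps₀ hs₁ hps₁ ⟨G, hG, hG₀, hG₁, -, hGb⟩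
  have htop : (ell a b hab.le 1 : ℝ) = b := by simp [ell]
  let γ : C(I, X) := ⟨fun t => G (1, t), by fun_prop⟩
  have h₀ := homotopicWith_flowSection hφcont hφp hφid ⟨s₀, hs₀⟩ hps₀ htop
    ((congrArg Subtype.val (hps₀ _)).trans htop)
  have h₁ := homotopicWith_flowSection hφcont hφp hφid ⟨s₁, hs₁⟩ hps₁ htop
    ((congrArg Subtype.val (hps₁ _)).trans htop)
  have hγ := flowSection_homotopicWith hφcont hφp γ hGb
  simp only [ContinuousMap.coe_mk, γ, hG₀, hG₁] at h₀ h₁ hγ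
  obtain ⟨H⟩ := (h₀.trans hγ).trans h₁.symm
  exact ⟨fun q => H (q.2, q.1), by fun_prop, H.apply_zero, H.apply_one,
    fun c t => H.prop t c⟩
end

section
/- Let a < b be real numbers, Z a topological space, Y ⊆ Z × [a,b] a subspace with increasing fibers, and p : Y → [a,b] the restriction of the projection. Let γ be a relative path and write γ(0) = (z₀, a). Then the map s : [a,b] → Y defined by s(c) = (z₀, c) is a well-defined continuous section of p, and γ is homotopic through relative paths to s ∘ ℓ. -/
open Set unitInterval

/-- For a subspace `Y ⊆ Z × [a,b]` with increasing fibers and `p : Y → [a,b]` the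
projection, every relative path `γ` with `γ 0 = (z₀, a)` gives rise to the constant
section `s c = (z₀, c)`, which is well defined and continuous, and `γ` is homotopic
through relative paths to `s ∘ ℓ`. -/
theorem stmt5 {Z : Type*} [TopologicalSpace Z] (a b : ℝ) (hab : a < b)
    (Y : Set (Z × Set.Icc a b))
    (hY : ∀ (z : Z) (c c' : Set.Icc a b), (z, c) ∈ Y → c ≤ c' → (z, c') ∈ Y)
    (γ : I → Y) (hγ : Continuous γ)
    (hγ0 : ((γ 0).1.2 : ℝ) = a) (hγ1 : ((γ 1).1.2 : ℝ) = b) :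
    ∃ s : Set.Icc a b → Y, Continuous s ∧
      (∀ c, (s c).1 = ((γ 0).1.1, c)) ∧
      (∀ c, (s c).1.2 = c) ∧
      ∃ H : I × I → Y, Continuous H ∧
        (∀ u, H (u, 0) = γ u) ∧
        (∀ u, H (u, 1) = s (ell a b hab.le u)) ∧
        (∀ t, ((H (0, t)).1.2 : ℝ) = a) ∧
        (∀ t, ((H (1, t)).1.2 : ℝ) = b) := by
  -- the height of the homotopy dominates that of `γ (u (1 - t))`, whose first coordinate it uses
  let h : I × I → ℝ := fun q =>
    max ((γ (q.1 * σ q.2)).1.2 : ℝ)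
      ((1 - (q.2 : ℝ)) * ((γ q.1).1.2 : ℝ) + (q.2 : ℝ) * (ell a b hab.le q.1 : ℝ))
  have hh : Continuous h := by
    simp only [h, ell]
    fun_prop
  have hmem : ∀ q, h q ∈ Icc a b := fun q => by
    have hconv := convex_Icc a b (γ q.1).1.2.2 (ell a b hab.le q.1).2
      (sub_nonneg.2 q.2.2.2) q.2.2.1 (sub_add_cancel _ _)
    exact ⟨le_max_of_le_left (γ _).1.2.2.1, max_le (γ _).1.2.2.2 hconv.2⟩
  have hs : ∀ c : Icc a b, ((γ 0).1.1, c) ∈ Y := fun c =>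
    hY _ (γ 0).1.2 c (γ 0).2 (Subtype.coe_le_coe.1 (hγ0.le.trans c.2.1))
  refine ⟨fun c => ⟨((γ 0).1.1, c), hs c⟩, by fun_prop, fun _ => rfl, fun _ => rfl,
    fun q => ⟨((γ (q.1 * σ q.2)).1.1, ⟨h q, hmem q⟩),
      hY _ (γ (q.1 * σ q.2)).1.2 _ (γ _).2 (Subtype.coe_le_coe.1 (le_max_left _ _))⟩,
    by fun_prop, fun u => ?_, fun u => ?_, fun t => ?_, fun t => ?_⟩
  · refine Subtype.ext (Prod.ext ?_ (Subtype.ext ?_)) <;> simp [h]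
  · refine Subtype.ext (Prod.ext ?_ (Subtype.ext ?_))
    · simp
    · simpa [h, hγ0] using (ell a b hab.le u).2.1
  · simp only [h, ell, zero_mul, hγ0, Icc.coe_zero]
    ring_nf
    simp
  · have hb : (1 - (t : ℝ)) * ((γ 1).1.2 : ℝ) + (t : ℝ) * (ell a b hab.le 1 : ℝ) = b := by
      simp only [ell, hγ1, Icc.coe_one]
      ring
    simp only [h, hb]
    exact max_eq_right (γ _).1.2.2.2
end

section
/- Let a < b be real numbers, Z a topological space, Y ⊆ Z × [a,b] a subspace with increasing fibers, and p : Y → [a,b] the restriction of the projection. Let s₀, s₁ be sections of p, and suppose there is a continuous path k : [0,1] → Y with k(0) = s₀(a), k(1) = s₁(a), and p(k(t)) = a for all t (a path from s₀(a) to s₁(a) inside the fiber over a). Then s₀ and s₁ are homotopic through sections. -/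
open Set

section

variable {Z T : Type*} [TopologicalSpace Z] [TopologicalSpace T]

/-- A map `G : I × T → Y` lying weakly below the sections can be pushed up to a homotopy through
sections when `Y` has increasing fibers. -/
theorem homotopicWith_sections_of_le [Preorder T] {Y : Set (Z × T)}
    (hY : ∀ (z : Z) (c c' : T), (z, c) ∈ Y → c ≤ c' → (z, c') ∈ Y)
    {f₀ f₁ : C(T, Y)} (hf₀ : ∀ c, (f₀ c).1.2 = c) (hf₁ : ∀ c, (f₁ c).1.2 = c)
    (G : C(unitInterval × T, Y)) (hle : ∀ x, (G x).1.2 ≤ x.2)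
    (hG₀ : ∀ c, (G (0, c)).1.1 = (f₀ c).1.1) (hG₁ : ∀ c, (G (1, c)).1.1 = (f₁ c).1.1) :
    ContinuousMap.HomotopicWith f₀ f₁ fun f => ∀ c, (f c).1.2 = c :=
  ⟨{ toFun := fun x => ⟨((G x).1.1, x.2), hY _ _ _ (G x).2 (hle x)⟩
     continuous_toFun := by fun_prop
     map_zero_left := fun c => Subtype.ext (Prod.ext (hG₀ c) (hf₀ c).symm)
     map_one_left := fun c => Subtype.ext (Prod.ext (hG₁ c) (hf₁ c).symm)
     prop' := fun _ _ => rfl }⟩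

/-- The section with constant first coordinate `z`, for a point `(z, ⊥)` of a subspace with
increasing fibers. -/
def constSection [Preorder T] [OrderBot T] {Y : Set (Z × T)}
    (hY : ∀ (z : Z) (c c' : T), (z, c) ∈ Y → c ≤ c' → (z, c') ∈ Y)
    (y : Y) (hy : y.1.2 = ⊥) : C(T, Y) where
  toFun c := ⟨(y.1.1, c), hY _ _ _ y.2 (hy.trans_le bot_le)⟩

/-- Over a path connected bounded lattice, every section is homotopic through sections to the
constant section at its value over `⊥`. -/
theorem homotopicWith_constSection [Lattice T] [BoundedOrder T] [ContinuousInf T]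
    [PathConnectedSpace T] {Y : Set (Z × T)}
    (hY : ∀ (z : Z) (c c' : T), (z, c) ∈ Y → c ≤ c' → (z, c') ∈ Y)
    (s : C(T, Y)) (hs : ∀ c, (s c).1.2 = c) :
    ContinuousMap.HomotopicWith s (constSection hY (s ⊥) (hs ⊥))
      fun f => ∀ c, (f c).1.2 = c := by
  let γ : Path (⊤ : T) ⊥ := PathConnectedSpace.somePath ⊤ ⊥
  refine homotopicWith_sections_of_le hY hs (fun _ => rfl)
    ⟨fun x => s (γ x.1 ⊓ x.2), by fun_prop⟩ (fun x => ?_) (fun c => ?_) (fun c => ?_)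
  · exact (hs _).trans_le inf_le_right
  · simp
  · simp [constSection]

end

/-- For a subspace `Y ⊆ Z × [a,b]` with increasing fibers and `p : Y → [a,b]` the
projection, two sections of `p` whose values at `a` are joined by a path inside the fiber
over `a` are homotopic through sections. -/
theorem stmt6 {Z : Type*} [TopologicalSpace Z] (a b : ℝ) (hab : a < b)
    (Y : Set (Z × Set.Icc a b))
    (hY : ∀ (z : Z) (c c' : Set.Icc a b), (z, c) ∈ Y → c ≤ c' → (z, c') ∈ Y)
    (s₀ s₁ : Set.Icc a b → Y)
    (hs₀ : Continuous s₀) (hs₀sec : ∀ c, (s₀ c).1.2 = c)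
    (hs₁ : Continuous s₁) (hs₁sec : ∀ c, (s₁ c).1.2 = c)
    (k : unitInterval → Y) (hk : Continuous k)
    (hk0 : k 0 = s₀ ⟨a, Set.left_mem_Icc.mpr hab.le⟩)
    (hk1 : k 1 = s₁ ⟨a, Set.left_mem_Icc.mpr hab.le⟩)
    (hka : ∀ t, ((k t).1.2 : ℝ) = a) :
    ∃ F : Set.Icc a b × unitInterval → Y, Continuous F ∧
      (∀ c, F (c, 0) = s₀ c) ∧
      (∀ c, F (c, 1) = s₁ c) ∧
      (∀ c t, (F (c, t)).1.2 = c) := by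
  have : Fact (a ≤ b) := ⟨hab.le⟩
  have : PathConnectedSpace (Set.Icc a b) := isPathConnected_iff_pathConnectedSpace.mp
    ((convex_Icc a b).isPathConnected (nonempty_Icc.mpr hab.le))
  have hbot : ∀ t, (k t).1.2 = ⊥ := fun t => Subtype.ext (hka t)
  have hfst₀ : (k 0).1.1 = (s₀ ⊥).1.1 := congrArg (fun y : Y => y.1.1) hk0
  have hfst₁ : (k 1).1.1 = (s₁ ⊥).1.1 := congrArg (fun y : Y => y.1.1) hk1
  have h₀ := homotopicWith_constSection hY ⟨s₀, hs₀⟩ hs₀sec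
  have h₁ := homotopicWith_constSection hY ⟨s₁, hs₁⟩ hs₁sec
  have hmid : ContinuousMap.HomotopicWith
      (constSection hY (s₀ ⊥) (hs₀sec ⊥)) (constSection hY (s₁ ⊥) (hs₁sec ⊥))
      fun f => ∀ c, (f c).1.2 = c :=
    homotopicWith_sections_of_le hY (fun _ => rfl) (fun _ => rfl)
      ⟨fun x => k x.1, by fun_prop⟩ (fun x => (hbot x.1).trans_le bot_le)
      (fun _ => hfst₀) (fun _ => hfst₁)
  obtain ⟨H⟩ := (h₀.trans hmid).trans h₁.symm
  exact ⟨fun x => H (x.2, x.1), by fun_prop, fun c => H.apply_zero c, fun c => H.apply_one c,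
    fun c t => H.prop t c⟩
end

section
/- Let a < b be real numbers, Z a topological space, Y ⊆ Z × [a,b] a subspace with increasing fibers, and p : Y → [a,b] the restriction of the projection. Let s be a section of p and write s(a) = (z_a, a). Then the constant section s' defined by s'(c) = (z_a, c) is a well-defined continuous section of p, and s is homotopic through sections to s'. -/
open Set

/-- For a subspace `Y ⊆ Z × [a,b]` with increasing fibers and `p : Y → [a,b]` the
projection, every section `s` with `s a = (z_a, a)` is homotopic through sections to the
constant section `s' c = (z_a, c)`, which is well defined and continuous. -/
theorem stmt7 {Z : Type*} [TopologicalSpace Z] (a b : ℝ) (hab : a < b)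
    (Y : Set (Z × Set.Icc a b))
    (hY : ∀ (z : Z) (c c' : Set.Icc a b), (z, c) ∈ Y → c ≤ c' → (z, c') ∈ Y)
    (s : Set.Icc a b → Y)
    (hs : Continuous s) (hssec : ∀ c, (s c).1.2 = c) :
    ∃ s' : Set.Icc a b → Y, Continuous s' ∧
      (∀ c, (s' c).1 = ((s ⟨a, Set.left_mem_Icc.mpr hab.le⟩).1.1, c)) ∧
      (∀ c, (s' c).1.2 = c) ∧
      ∃ F : Set.Icc a b × unitInterval → Y, Continuous F ∧
        (∀ c, F (c, 0) = s c) ∧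
        (∀ c, F (c, 1) = s' c) ∧
        (∀ c t, (F (c, t)).1.2 = c) := by
  have mem_of_le (d c : Set.Icc a b) (hdc : d ≤ c) : ((s d).1.1, c) ∈ Y := by
    refine hY _ d c ?_ hdc
    have h := (s d).2
    rwa [← Prod.mk.eta (p := (s d).1), hssec d] at h
  have shrink_mem (x : Set.Icc a b × unitInterval) :
      (x.1 : ℝ) - x.2 * (x.1 - a) ∈ Set.Icc a b := by
    obtain ⟨⟨c, hac, hcb⟩, ⟨t, ht0, ht1⟩⟩ := x
    constructor <;> dsimp only <;> nlinarith
  let r (x : Set.Icc a b × unitInterval) : Set.Icc a b := ⟨_, shrink_mem x⟩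
  have hr : Continuous r := by
    refine Continuous.subtype_mk ?_ _
    fun_prop
  have r_le (x) : r x ≤ x.1 :=
    sub_le_self _ (mul_nonneg x.2.2.1 (sub_nonneg.mpr x.1.2.1))
  have r_zero (c) : r (c, 0) = c := Subtype.ext (by simp [r])
  have r_one (c) : r (c, 1) = ⟨a, Set.left_mem_Icc.mpr hab.le⟩ := Subtype.ext (by simp [r])
  refine ⟨fun c => ⟨(_, c), mem_of_le ⟨a, Set.left_mem_Icc.mpr hab.le⟩ c c.2.1⟩,
    by fun_prop, fun _ => rfl, fun _ => rfl,
    fun x => ⟨((s (r x)).1.1, x.1), mem_of_le _ _ (r_le x)⟩, by fun_prop, fun c => ?_,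
    fun c => ?_, fun _ _ => rfl⟩
  · exact Subtype.ext (Prod.ext (by simp only [r_zero]) (hssec c).symm)
  · simp only [r_one]
end

section
/- Let a < b be real numbers, Z a topological space, Y ⊆ Z × [a,b] a subspace with decreasing fibers (i.e., (z,c) ∈ Y and a ≤ c' ≤ c imply (z,c') ∈ Y), and p : Y → [a,b] the restriction of the projection. Let γ be a relative path and write γ(1) = (z₁, b). Then the map s : [a,b] → Y defined by s(c) = (z₁, c) is a well-defined continuous section of p, and γ is homotopic through relative paths to s ∘ ℓ. -/
open Set unitInterval

/-- The straight-line homotopy from `h : I → [a,b]` to the affine homeomorphism `ell`. -/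
noncomputable def lineToEll {a b : ℝ} (hab : a ≤ b) (h : I → Set.Icc a b) :
    I × I → Set.Icc a b :=
  fun x => ⟨(1 - (x.2 : ℝ)) * (h x.1 : ℝ) + (x.2 : ℝ) * (ell a b hab x.1 : ℝ),
    convex_Icc a b (h x.1).2 (ell a b hab x.1).2 (sub_nonneg.2 x.2.2.2) x.2.2.1 (by ring)⟩

theorem continuous_lineToEll {a b : ℝ} (hab : a ≤ b) {h : I → Set.Icc a b}
    (hh : Continuous h) : Continuous (lineToEll hab h) := by
  unfold lineToEll ell
  fun_prop

/-- For a subspace `Y ⊆ Z × [a,b]` with decreasing fibers and `p : Y → [a,b]` the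
projection, every relative path `γ` with `γ 1 = (z₁, b)` gives rise to the constant
section `s c = (z₁, c)`, which is well defined and continuous, and `γ` is homotopic
through relative paths to `s ∘ ℓ`. -/
theorem stmt8 {Z : Type*} [TopologicalSpace Z] (a b : ℝ) (hab : a < b)
    (Y : Set (Z × Set.Icc a b))
    (hY : ∀ (z : Z) (c c' : Set.Icc a b), (z, c) ∈ Y → c' ≤ c → (z, c') ∈ Y)
    (γ : I → Y) (hγ : Continuous γ)
    (hγ0 : ((γ 0).1.2 : ℝ) = a) (hγ1 : ((γ 1).1.2 : ℝ) = b) :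
    ∃ s : Set.Icc a b → Y, Continuous s ∧
      (∀ c, (s c).1 = ((γ 1).1.1, c)) ∧
      (∀ c, (s c).1.2 = c) ∧
      ∃ H : I × I → Y, Continuous H ∧
        (∀ u, H (u, 0) = γ u) ∧
        (∀ u, H (u, 1) = s (ell a b hab.le u)) ∧
        (∀ t, ((H (0, t)).1.2 : ℝ) = a) ∧
        (∀ t, ((H (1, t)).1.2 : ℝ) = b) := by
  have top : ∀ c, c ≤ (γ 1).1.2 := fun c => Subtype.coe_le_coe.1 (c.2.2.trans_eq hγ1.symm)
  have hz : Continuous fun u => (γ u).1.1 := by fun_prop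
  have hh : Continuous fun u => (γ u).1.2 := by fun_prop
  have hk := continuous_lineToEll hab.le hh
  refine ⟨fun c => ⟨((γ 1).1.1, c), hY _ _ _ (γ 1).2 (top c)⟩, by fun_prop,
    fun _ => rfl, fun _ => rfl, ?_⟩
  -- Move the `Z`-coordinate ahead to time `max u t`, and cap the straight-line homotopy of
  -- heights by the height available there.
  refine ⟨fun x => ⟨((γ (max x.1 x.2)).1.1,
      min (γ (max x.1 x.2)).1.2 (lineToEll hab.le (fun u => (γ u).1.2) x)),
    hY _ _ _ (γ (max x.1 x.2)).2 (min_le_left _ _)⟩, ?_, ?_, ?_, ?_, ?_⟩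
  · have hm : Continuous fun x : I × I => max x.1 x.2 := by fun_prop
    exact ((hz.comp hm).prodMk ((hh.comp hm).min hk)).subtype_mk _
  · intro u
    have hline : lineToEll hab.le (fun u => (γ u).1.2) (u, 0) = (γ u).1.2 :=
      Subtype.ext (by simp [lineToEll])
    simp [hline]
  · intro u
    have hmax : max u 1 = 1 := max_eq_right u.2.2
    have hline : lineToEll hab.le (fun u => (γ u).1.2) (u, 1) = ell a b hab.le u :=
      Subtype.ext (by simp [lineToEll])
    simp only [hmax, hline, min_eq_right (top _)]
  · intro t
    have hline : (lineToEll hab.le (fun u => (γ u).1.2) (0, t) : ℝ) = a := by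
      simp only [lineToEll, ell, hγ0, Icc.coe_zero]
      ring
    have hle : lineToEll hab.le (fun u => (γ u).1.2) (0, t) ≤ (γ (max 0 t)).1.2 :=
      Subtype.coe_le_coe.1 (hline.trans_le (γ (max 0 t)).1.2.2.1)
    simp only [min_eq_right hle, hline]
  · intro t
    have hmax : max 1 t = 1 := max_eq_left t.2.2
    have hline : (lineToEll hab.le (fun u => (γ u).1.2) (1, t) : ℝ) = b := by
      simp only [lineToEll, ell, hγ1, Icc.coe_one]
      ring
    simp only [hmax, min_eq_right (top _), hline]
end

section
/- Let a < b be real numbers, Z a topological space, Y ⊆ Z × [a,b] a subspace, and p : Y → [a,b] the restriction of the projection. For c ∈ [a,b] write Y_c = {z ∈ Z : (z,c) ∈ Y}. Let t₀ ∈ (a,b), and suppose there are subsets A, B ⊆ Z such that either (i) A ⊆ B, Y_c = A for all c ∈ [a,t₀) and Y_c = B for all c ∈ [t₀,b], or (ii) B ⊆ A, Y_c = A for all c ∈ [a,t₀] and Y_c = B for all c ∈ (t₀,b] (the local structure of a stacked simplicial complex near a single transition time). Then p is 0-sectional: every relative path is homotopic through relative paths to s ∘ ℓ for some section s of p, and any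 two sections s₀, s₁ of p such that s₀ ∘ ℓ and s₁ ∘ ℓ are homotopic through relative paths are homotopic through sections. -/
open Set unitInterval

/-- Every relative path of `Y → [a,b]` is homotopic to a section, and sections that are homotopic
through relative paths are homotopic through sections. -/
def IsZeroSectional {Z : Type*} [TopologicalSpace Z] (a b : ℝ) (hab : a < b)
    (Y : Set (Z × Set.Icc a b)) : Prop :=
  (∀ γ : I → Y, Continuous γ →
      ((γ 0).1.2 : ℝ) = a → ((γ 1).1.2 : ℝ) = b →
      ∃ s : Set.Icc a b → Y, Continuous s ∧ (∀ c, (s c).1.2 = c) ∧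
        ∃ H : I × I → Y, Continuous H ∧
          (∀ u, H (u, 0) = γ u) ∧
          (∀ u, H (u, 1) = s (ell a b hab.le u)) ∧
          (∀ t, ((H (0, t)).1.2 : ℝ) = a) ∧
          (∀ t, ((H (1, t)).1.2 : ℝ) = b)) ∧
    (∀ s₀ s₁ : Set.Icc a b → Y,
      Continuous s₀ → (∀ c, (s₀ c).1.2 = c) →
      Continuous s₁ → (∀ c, (s₁ c).1.2 = c) →
      (∃ G : I × I → Y, Continuous G ∧
        (∀ u, G (u, 0) = s₀ (ell a b hab.le u)) ∧
        (∀ u, G (u, 1) = s₁ (ell a b hab.le u)) ∧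
        (∀ t, ((G (0, t)).1.2 : ℝ) = a) ∧
        (∀ t, ((G (1, t)).1.2 : ℝ) = b)) →
      ∃ F : Set.Icc a b × I → Y, Continuous F ∧
        (∀ c, F (c, 0) = s₀ c) ∧
        (∀ c, F (c, 1) = s₁ c) ∧
        (∀ c t, (F (c, t)).1.2 = c))

section

variable {Z : Type*} [TopologicalSpace Z] {a b : ℝ} {Y : Set (Z × Set.Icc a b)}

lemma exists_section_homotopic_of_upward_closed (hab : a < b)
    (up : ∀ z c d, (z, c) ∈ Y → c ≤ d → (z, d) ∈ Y) (γ : I → Y) (hγ : Continuous γ)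
    (h0 : ((γ 0).1.2 : ℝ) = a) (h1 : ((γ 1).1.2 : ℝ) = b) :
    ∃ s : Set.Icc a b → Y, Continuous s ∧ (∀ c, (s c).1.2 = c) ∧
      ∃ H : I × I → Y, Continuous H ∧
        (∀ u, H (u, 0) = γ u) ∧
        (∀ u, H (u, 1) = s (ell a b hab.le u)) ∧
        (∀ t, ((H (0, t)).1.2 : ℝ) = a) ∧
        (∀ t, ((H (1, t)).1.2 : ℝ) = b) := by
  have h0le (x : Set.Icc a b) : (γ 0).1.2 ≤ x := Subtype.coe_le_coe.mp (h0.le.trans x.2.1)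
  -- Contract the path to its starting point while keeping its height above the original one.
  let g : I × I → Set.Icc a b := fun q => Set.projIcc a b hab.le
    ((1 - (q.2 : ℝ)) * ((γ q.1).1.2 : ℝ) + q.2 * (a + q.1 * (b - a)))
  have hg : Continuous g := by
    refine continuous_projIcc.comp ?_
    fun_prop
  refine ⟨fun x => ⟨((γ 0).1.1, x), up _ _ _ (γ 0).2 (h0le x)⟩, by fun_prop, fun _ => rfl,
    fun q => ⟨((γ (σ q.2 * q.1)).1.1, max (γ (σ q.2 * q.1)).1.2 (g q)),
      up _ _ _ (γ _).2 (le_max_left _ _)⟩, ?_, ?_, ?_, ?_, ?_⟩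
  · refine Continuous.subtype_mk (Continuous.prodMk ?_ (Continuous.max ?_ hg)) _ <;> fun_prop
  · intro u
    have : g (u, 0) = (γ u).1.2 := by simp [g]
    apply Subtype.ext
    simp [this]
  · intro u
    have : g (u, 1) = ell a b hab.le u := by
      have := Set.projIcc_val hab.le (ell a b hab.le u)
      simpa [g, ell] using this
    apply Subtype.ext
    simp [this, h0le]
  · intro t
    have : g (0, t) = (γ 0).1.2 := by
      have e : (1 - (t : ℝ)) * a + t * a = a := by ring
      apply Subtype.ext
      simp [g, h0, e]
    simp [this, h0]
  · intro t
    have : ((g (1, t) : Set.Icc a b) : ℝ) = b := by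
      have e : (1 - (t : ℝ)) * b + t * b = b := by ring
      simp [g, h1, e]
    refine le_antisymm ?_ (this.ge.trans (Subtype.coe_le_coe.mpr (le_max_right _ _)))
    exact (max (γ (σ t * 1)).1.2 (g (1, t))).2.2

lemma homotopic_sections_of_upward_closed (hab : a < b)
    (up : ∀ z c d, (z, c) ∈ Y → c ≤ d → (z, d) ∈ Y) (s₀ s₁ : Set.Icc a b → Y)
    (h₀ : ∀ c, (s₀ c).1.2 = c) (h₁ : ∀ c, (s₁ c).1.2 = c)
    (G : I × I → Y) (hG : Continuous G)
    (hG0 : ∀ u, G (u, 0) = s₀ (ell a b hab.le u))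
    (hG1 : ∀ u, G (u, 1) = s₁ (ell a b hab.le u))
    (hGa : ∀ t, ((G (0, t)).1.2 : ℝ) = a) :
    ∃ F : Set.Icc a b × I → Y, Continuous F ∧
      (∀ c, F (c, 0) = s₀ c) ∧
      (∀ c, F (c, 1) = s₁ c) ∧
      (∀ c t, (F (c, t)).1.2 = c) := by
  have hba : 0 < b - a := sub_pos.mpr hab
  let e : Set.Icc a b → I := fun x => ⟨((x : ℝ) - a) / (b - a),
    div_nonneg (sub_nonneg.mpr x.2.1) hba.le, by
      rw [div_le_one hba]; linarith [x.2.2]⟩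
  have he : Continuous e := by
    refine Continuous.subtype_mk ?_ _
    fun_prop
  have hle (x) : ell a b hab.le (e x) = x := by
    apply Subtype.ext
    simp only [ell, e]
    field_simp
    ring
  have hmono (r : I) (x) : ell a b hab.le (r * e x) ≤ x := by
    conv_rhs => rw [← hle x]
    apply Subtype.coe_le_coe.mp
    simp only [ell, Set.Icc.coe_mul]
    gcongr
    exact mul_le_of_le_one_left (e x).2.1 r.2.2
  -- Contract `s₀` to its value at `a`, follow `G (0, ·)`, then expand to `s₁`.
  let scale : I → I := fun t => Set.projIcc 0 1 zero_le_one (|6 * (t : ℝ) - 3| - 2)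
  let time : I → I := fun t => Set.projIcc 0 1 zero_le_one (3 * (t : ℝ) - 1)
  have hscale : Continuous scale := continuous_projIcc.comp (by fun_prop)
  have htime : Continuous time := continuous_projIcc.comp (by fun_prop)
  have key (x : Set.Icc a b) (t : I) : (G (scale t * e x, time t)).1.2 ≤ x := by
    rcases le_total (3 * (t : ℝ) - 1) 0 with ht | ht
    · have : time t = 0 := Set.projIcc_of_le_left _ ht
      rw [this, hG0, h₀]
      exact hmono _ _
    rcases le_total 1 (3 * (t : ℝ) - 1) with ht' | ht'
    · have : time t = 1 := Set.projIcc_of_right_le _ ht'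
      rw [this, hG1, h₁]
      exact hmono _ _
    · have : scale t = 0 := by
        apply Set.projIcc_of_le_left
        rw [sub_nonpos, abs_le]
        constructor <;> linarith
      rw [this, zero_mul]
      exact Subtype.coe_le_coe.mp ((hGa _).le.trans x.2.1)
  refine ⟨fun q => ⟨((G (scale q.2 * e q.1, time q.2)).1.1, q.1), up _ _ _ (G _).2 (key _ _)⟩,
    by fun_prop, ?_, ?_, fun _ _ => rfl⟩
  · intro c
    have hs : scale 0 = 1 := Set.projIcc_of_right_le _ (by norm_num)
    have ht : time 0 = 0 := Set.projIcc_of_le_left _ (by norm_num)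
    apply Subtype.ext
    simp only [hs, ht, one_mul, hG0, hle]
    exact Prod.ext rfl (h₀ c).symm
  · intro c
    have hs : scale 1 = 1 := Set.projIcc_of_right_le _ (by norm_num)
    have ht : time 1 = 1 := Set.projIcc_of_right_le _ (by norm_num)
    apply Subtype.ext
    simp only [hs, ht, one_mul, hG1, hle]
    exact Prod.ext rfl (h₁ c).symm

lemma isZeroSectional_of_upward_closed (hab : a < b)
    (up : ∀ z c d, (z, c) ∈ Y → c ≤ d → (z, d) ∈ Y) : IsZeroSectional a b hab Y :=
  ⟨exists_section_homotopic_of_upward_closed hab up,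
    fun s₀ s₁ _ h₀ _ h₁ ⟨G, hG, hG0, hG1, hGa, _⟩ =>
      homotopic_sections_of_upward_closed hab up s₀ s₁ h₀ h₁ G hG hG0 hG1 hGa⟩

/-- The reflection `c ↦ a + b - c` of `[a,b]`. -/
def reflectIcc (c : Set.Icc a b) : Set.Icc a b :=
  ⟨a + b - c, by linarith [c.2.2], by linarith [c.2.1]⟩

@[simp]
lemma coe_reflectIcc (c : Set.Icc a b) : (reflectIcc c : ℝ) = a + b - c := rfl

@[simp]
lemma reflectIcc_reflectIcc (c : Set.Icc a b) : reflectIcc (reflectIcc c) = c :=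
  Subtype.ext (by simp)

@[fun_prop]
lemma continuous_reflectIcc : Continuous (reflectIcc : Set.Icc a b → Set.Icc a b) := by
  unfold reflectIcc
  fun_prop

lemma ell_symm (hab : a ≤ b) (u : I) : ell a b hab (σ u) = reflectIcc (ell a b hab u) :=
  Subtype.ext (by simp [ell]; ring)

lemma IsZeroSectional.of_reflect {hab : a < b}
    (h : IsZeroSectional a b hab {y : Z × Set.Icc a b | (y.1, reflectIcc y.2) ∈ Y}) :
    IsZeroSectional a b hab Y := by
  let r : {y : Z × Set.Icc a b | (y.1, reflectIcc y.2) ∈ Y} → Y :=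
    fun y => ⟨(y.1.1, reflectIcc y.1.2), y.2⟩
  let r' : Y → {y : Z × Set.Icc a b | (y.1, reflectIcc y.2) ∈ Y} :=
    fun y => ⟨(y.1.1, reflectIcc y.1.2), by simp⟩
  have hr : Continuous r := by fun_prop
  have hr' : Continuous r' := by fun_prop
  have hrr' (y) : r (r' y) = y := Subtype.ext (by simp [r, r'])
  have hr2 (y) : (r y).1.2 = reflectIcc y.1.2 := rfl
  have hr2' (y) : (r' y).1.2 = reflectIcc y.1.2 := rfl
  constructor
  · intro γ hγ h0 h1
    obtain ⟨s, hs, hsc, H, hH, H0, H1, Ha, Hb⟩ := h.1 (fun u => r' (γ (σ u))) (by fun_prop)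
      (by simp [hr2', h1]) (by simp [hr2', h0])
    refine ⟨fun c => r (s (reflectIcc c)), by fun_prop, by simp [hr2, hsc],
      fun q => r (H (σ q.1, q.2)), by fun_prop, ?_, ?_, ?_, ?_⟩
    · simp [H0, hrr']
    · simp [H1, ell_symm]
    · simp [hr2, Hb]
    · simp [hr2, Ha]
  · rintro s₀ s₁ hs₀ h₀ hs₁ h₁ ⟨G, hG, hG0, hG1, hGa, hGb⟩
    obtain ⟨F, hF, F0, F1, Fc⟩ := h.2 (fun c => r' (s₀ (reflectIcc c)))
      (fun c => r' (s₁ (reflectIcc c))) (by fun_prop) (by simp [hr2', h₀]) (by fun_prop)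
      (by simp [hr2', h₁])
      ⟨fun q => r' (G (σ q.1, q.2)), by fun_prop, by simp [hG0, ell_symm],
        by simp [hG1, ell_symm], by simp [hr2', hGb], by simp [hr2', hGa]⟩
    exact ⟨fun q => r (F (reflectIcc q.1, q.2)), by fun_prop, by simp [F0, hrr'],
      by simp [F1, hrr'], by simp [hr2, Fc]⟩

lemma isZeroSectional_of_downward_closed (hab : a < b)
    (down : ∀ z c d, (z, c) ∈ Y → d ≤ c → (z, d) ∈ Y) : IsZeroSectional a b hab Y :=
  .of_reflect <| isZeroSectional_of_upward_closed hab fun z _ _ hc hcd =>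
    down z _ _ hc <| Subtype.coe_le_coe.mp <| sub_le_sub_left (Subtype.coe_le_coe.mpr hcd) _

end

/-- A subspace `Y ⊆ Z × [a,b]` whose fibers are constant except for a single jump at
`t₀ ∈ (a,b)` (either fibers `A ⊆ B` jumping up at `t₀` with the fiber over `t₀` equal
to `B`, or fibers `A ⊇ B` jumping down just after `t₀` with the fiber over `t₀` equal
to `A`) is 0-sectional: every relative path is homotopic through relative paths to
`s ∘ ℓ` for some section `s`, and any two sections whose associated relative paths are
homotopic through relative paths are homotopic through sections. -/
theorem stmt9 {Z : Type*} [TopologicalSpace Z] (a b : ℝ) (hab : a < b)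
    (Y : Set (Z × Set.Icc a b))
    (t₀ : ℝ) (ht₀a : a < t₀) (ht₀b : t₀ < b)
    (hstacked : ∃ A B : Set Z,
      (A ⊆ B ∧ (∀ c : Set.Icc a b, (c : ℝ) < t₀ → {z : Z | (z, c) ∈ Y} = A) ∧
        (∀ c : Set.Icc a b, t₀ ≤ (c : ℝ) → {z : Z | (z, c) ∈ Y} = B)) ∨
      (B ⊆ A ∧ (∀ c : Set.Icc a b, (c : ℝ) ≤ t₀ → {z : Z | (z, c) ∈ Y} = A) ∧
        (∀ c : Set.Icc a b, t₀ < (c : ℝ) → {z : Z | (z, c) ∈ Y} = B))) :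
    (∀ γ : I → Y, Continuous γ →
      ((γ 0).1.2 : ℝ) = a → ((γ 1).1.2 : ℝ) = b →
      ∃ s : Set.Icc a b → Y, Continuous s ∧ (∀ c, (s c).1.2 = c) ∧
        ∃ H : I × I → Y, Continuous H ∧
          (∀ u, H (u, 0) = γ u) ∧
          (∀ u, H (u, 1) = s (ell a b hab.le u)) ∧
          (∀ t, ((H (0, t)).1.2 : ℝ) = a) ∧
          (∀ t, ((H (1, t)).1.2 : ℝ) = b)) ∧
    (∀ s₀ s₁ : Set.Icc a b → Y,
      Continuous s₀ → (∀ c, (s₀ c).1.2 = c) →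
      Continuous s₁ → (∀ c, (s₁ c).1.2 = c) →
      (∃ G : I × I → Y, Continuous G ∧
        (∀ u, G (u, 0) = s₀ (ell a b hab.le u)) ∧
        (∀ u, G (u, 1) = s₁ (ell a b hab.le u)) ∧
        (∀ t, ((G (0, t)).1.2 : ℝ) = a) ∧
        (∀ t, ((G (1, t)).1.2 : ℝ) = b)) →
      ∃ F : Set.Icc a b × I → Y, Continuous F ∧
        (∀ c, F (c, 0) = s₀ c) ∧
        (∀ c, F (c, 1) = s₁ c) ∧
        (∀ c t, (F (c, t)).1.2 = c)) := by
  obtain ⟨A, B, ⟨hAB, hA, hB⟩ | ⟨hBA, hA, hB⟩⟩ := hstacked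
  · refine isZeroSectional_of_upward_closed hab fun z c d hc hcd => ?_
    have hcd' : (c : ℝ) ≤ d := hcd
    rcases lt_or_ge (d : ℝ) t₀ with hd | hd
    · exact (hA d hd).ge ((hA c (hcd'.trans_lt hd)).le hc)
    · refine (hB d hd).ge ?_
      rcases lt_or_ge (c : ℝ) t₀ with hc' | hc'
      · exact hAB ((hA c hc').le hc)
      · exact (hB c hc').le hc
  · refine isZeroSectional_of_downward_closed hab fun z c d hc hcd => ?_
    have hcd' : (d : ℝ) ≤ c := hcd
    rcases le_or_gt (d : ℝ) t₀ with hd | hd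
    · refine (hA d hd).ge ?_
      rcases le_or_gt (c : ℝ) t₀ with hc' | hc'
      · exact (hA c hc').le hc
      · exact hBA ((hB c hc').le hc)
    · exact (hB d hd).ge ((hB c (hd.trans_le hcd')).le hc)
end
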